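/- For every inverse temperature β ∈ (0,∞), every exponent q ∈ (0,2) and every range exponent α ∈ (1,2], there exists a constant c_β > 0 (depending only on β, α and q) such that for every integer N ≥ 1, the variance of the height at the origin under the discrete q-SOS long-range chain satisfies c_β ≤ Var^{q-SOS}_{N,β,α}[φ(0)]. -/

import Mathlib

noncomputable section

/-- Configurations of the long-range chain of length `N`: integer-valued height functions
on `ℤ` vanishing outside `{-N, …, N}`. -/
def ChainConfig (N : ℕ) : Type :=
  {φ : ℤ → ℤ // ∀ k : ℤ, (N : ℤ) < |k| → φ k = 0}

/-- Energy `β ∑_{i ≠ j} |φ(i) − φ(j)|^q / |i − j|^α` of a configuration of the long-range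
chain with potential exponent `q` and range exponent `α`. -/
def chainEnergy (β α q : ℝ) (φ : ℤ → ℤ) : ℝ :=
  β * ∑' p : ℤ × ℤ,
      if p.1 = p.2 then 0
      else |((φ p.1 - φ p.2 : ℤ) : ℝ)| ^ q / |((p.1 - p.2 : ℤ) : ℝ)| ^ α

/-- Boltzmann weight of a configuration. -/
def chainWeight (β α q : ℝ) (φ : ℤ → ℤ) : ℝ :=
  Real.exp (-chainEnergy β α q φ)

/-- Partition function of the long-range chain. -/
def chainZ (N : ℕ) (β α q : ℝ) : ℝ :=
  ∑' φ : ChainConfig N, chainWeight β α q φ.val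

/-- Mean of the height at the origin. -/
def chainMean (N : ℕ) (β α q : ℝ) : ℝ :=
  (∑' φ : ChainConfig N, ((φ.val 0 : ℤ) : ℝ) * chainWeight β α q φ.val) / chainZ N β α q

/-- Variance of the height at the origin under the long-range chain `μ_{N,β,α}`
(with potential exponent `q`; `q = 2` is the discrete Gaussian chain,
`q ∈ (0,2)` the `q`-SOS chain). -/
def chainVar (N : ℕ) (β α q : ℝ) : ℝ :=
  (∑' φ : ChainConfig N, ((φ.val 0 : ℤ) : ℝ) ^ 2 * chainWeight β α q φ.val) / chainZ N β α q
    - chainMean N β α q ^ 2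

end

open Real Filter in
theorem aux_one_dim (q c : ℝ) (hq : 0 < q) (hc : 0 < c) :
    Summable (fun n : ℤ => (1 + (n:ℝ)^2) * Real.exp (-(c * |(n:ℝ)| ^ q))) := by
  have hnat : Summable (fun n : ℕ => (1 + (n:ℝ)^2) * Real.exp (-(c * |(n:ℝ)| ^ q))) := by
    have h1 := isLittleO_exp_neg_mul_rpow_atTop hc (-4 / q)
    have h2 : Tendsto (fun n : ℕ => (n:ℝ) ^ q) atTop atTop :=
      (tendsto_rpow_atTop hq).comp tendsto_natCast_atTop_atTop
    have h3 := (h1.comp_tendsto h2).bound (c := 1) one_pos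
    have hs : Summable (fun n : ℕ => 2 * (1 / (n:ℝ) ^ 2)) :=
      (Real.summable_one_div_nat_pow.mpr (by norm_num)).mul_left 2
    refine hs.of_norm_bounded_eventually_nat ?_
    filter_upwards [h3, eventually_ge_atTop 1] with n hn hn1
    have hn' : (1:ℝ) ≤ n := by exact_mod_cast hn1
    have hpos : (0:ℝ) < n := by linarith
    simp only [Function.comp, Real.norm_eq_abs, abs_exp] at hn
    rw [← Real.rpow_mul hpos.le, mul_div_cancel₀ _ hq.ne', abs_of_pos (Real.rpow_pos_of_pos hpos _),
      one_mul, Real.rpow_neg hpos.le] at hn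
    have e4 : (n:ℝ) ^ (4:ℝ) = (n:ℝ)^4 := by exact_mod_cast Real.rpow_natCast (n:ℝ) 4
    rw [e4, neg_mul] at hn
    rw [abs_of_pos hpos, Real.norm_eq_abs, abs_of_nonneg (by positivity)]
    calc (1 + (n:ℝ)^2) * Real.exp (-(c * (n:ℝ) ^ q)) ≤ (2 * (n:ℝ)^2) * ((n:ℝ)^4)⁻¹ := by
          gcongr
          nlinarith
      _ = 2 * (1 / (n:ℝ)^2) := by field_simp
  refine Summable.of_nat_of_neg hnat ?_
  simpa using hnat

theorem aux_pi (g : ℤ → ℝ) (hg0 : ∀ n, 0 ≤ g n) (hg : Summable g) (n : ℕ) :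
    Summable (fun x : Fin n → ℤ => ∏ i, g (x i)) := by
  induction n with
  | zero => exact Summable.of_finite
  | succ n ih =>
    rw [← (Fin.consEquiv (fun _ : Fin (n+1) => ℤ)).summable_iff]
    have := hg.mul_of_nonneg ih hg0 (fun x => Finset.prod_nonneg (fun i _ => hg0 _))
    refine this.congr ?_
    rintro ⟨a, x⟩
    simp [Fin.prod_univ_succ, Fin.consEquiv]

noncomputable def aTerm (α q : ℝ) (φ : ℤ → ℤ) (p : ℤ × ℤ) : ℝ :=
  if p.1 = p.2 then 0
      else |((φ p.1 - φ p.2 : ℤ) : ℝ)| ^ q / |((p.1 - p.2 : ℤ) : ℝ)| ^ α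

theorem aTerm_nonneg (α q : ℝ) (φ : ℤ → ℤ) (p : ℤ × ℤ) : 0 ≤ aTerm α q φ p := by
  unfold aTerm; split_ifs <;> positivity

theorem aux_h (α : ℝ) (hα : 1 < α) : Summable (fun n : ℤ => 1 / |(n:ℝ)| ^ α) :=
  by
  have hnat : Summable (fun n : ℕ => 1 / |(n:ℝ)| ^ α) := by
    simpa using Real.summable_one_div_nat_rpow.mpr hα
  refine Summable.of_nat_of_neg hnat ?_
  simpa using hnat

theorem aTerm_summable (α q : ℝ) (hα : 1 < α) (hq : 0 < q) (N : ℕ) (φ : ℤ → ℤ)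
    (hφ : ∀ k : ℤ, (N : ℤ) < |k| → φ k = 0) : Summable (aTerm α q φ) := by
  obtain ⟨B, hB⟩ : ∃ B : ℤ, ∀ k, |φ k| ≤ B := by
    refine ⟨∑ k ∈ Finset.Icc (-(N:ℤ)) N, |φ k|, fun k => ?_⟩
    by_cases hk : (N:ℤ) < |k|
    · rw [hφ k hk, abs_zero]; exact Finset.sum_nonneg (fun _ _ => abs_nonneg _)
    · exact Finset.single_le_sum (f := fun k => |φ k|) (fun _ _ => abs_nonneg _)
        (Finset.mem_Icc.mpr (abs_le.mp (not_lt.mp hk)))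
  let u : ℤ → ℝ := fun k => if (N:ℤ) < |k| then 0 else 1
  have hu0 : ∀ k, 0 ≤ u k := fun k => by simp only [u]; split_ifs <;> norm_num
  have hu : Summable u := by
    apply summable_of_hasFiniteSupport
    refine (Finset.finite_toSet (Finset.Icc (-(N:ℤ)) N)).subset ?_
    intro k hk
    simp only [u, Function.mem_support, ne_eq, ite_eq_left_iff, not_forall] at hk
    obtain ⟨h, _⟩ := hk
    simpa using (abs_le.mp (not_lt.mp h))
  have hp := hu.mul_of_nonneg (aux_h α hα) hu0 (fun n => by positivity)
  let e1 : ℤ × ℤ ≃ ℤ × ℤ :=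
    ⟨fun p => (p.1, p.1 - p.2), fun p => (p.1, p.1 - p.2), fun p => by ext <;> simp, fun p => by ext <;> simp⟩
  have h1 := e1.summable_iff.mpr hp
  have h2 := (Equiv.prodComm ℤ ℤ).summable_iff.mpr h1
  refine Summable.of_nonneg_of_le (aTerm_nonneg α q φ) ?_ ((h1.add h2).mul_left ((2 * (B:ℝ)) ^ q))
  rintro ⟨i, j⟩
  have hB0 : (0:ℝ) ≤ B := by exact_mod_cast (abs_nonneg (φ 0)).trans (hB 0)
  have hsym : |(j:ℝ) - i| = |(i:ℝ) - j| := abs_sub_comm _ _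
  simp only [aTerm, e1, Function.comp, Equiv.coe_fn_mk, Equiv.prodComm_apply, Prod.swap, Int.cast_sub, hsym]
  have hnn : 0 ≤ 1 / |(i:ℝ) - j| ^ α := by positivity
  have hBq : 0 ≤ (2 * (B:ℝ)) ^ q := by positivity
  have hui := hu0 i
  have huj := hu0 j
  split_ifs with hij
  · positivity
  · by_cases hz : (N:ℤ) < |i| ∧ (N:ℤ) < |j|
    · rw [hφ i hz.1, hφ j hz.2]
      simp [Real.zero_rpow hq.ne']
      positivity
    · have h1u : 1 ≤ u i + u j := by
        simp only [u] at *
        by_cases hi : (N:ℤ) < |i|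
        · have : ¬ (N:ℤ) < |j| := fun h => hz ⟨hi, h⟩
          simp [hi, this]
        · rw [if_neg hi]; linarith
      have hd : |(φ i:ℝ) - φ j| ≤ 2 * B := by
        have a1 : |(φ i:ℝ)| ≤ B := by exact_mod_cast hB i
        have a2 : |(φ j:ℝ)| ≤ B := by exact_mod_cast hB j
        have := abs_sub (φ i:ℝ) (φ j)
        linarith
      have : |(φ i:ℝ) - φ j| ^ q ≤ (2 * (B:ℝ)) ^ q :=
        Real.rpow_le_rpow (abs_nonneg _) hd hq.le
      calc _ = |(φ i:ℝ) - φ j| ^ q * (1 * (1 / |(i:ℝ) - j| ^ α)) := by ring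
        _ ≤ (2 * (B:ℝ)) ^ q * ((u i + u j) * (1 / |(i:ℝ) - j| ^ α)) := by gcongr
        _ = _ := by ring

theorem aux_ineq (q : ℝ) (hq : 0 < q) (hq2 : q < 2) (a d : ℝ) :
    |a + d| ^ q + |a - d| ^ q ≤ 2 * |a| ^ q + 2 * |d| ^ q := by
  have key : ∀ x : ℝ, |x| ^ q = (x^2) ^ (q/2) := fun x => by
    rw [← sq_abs, ← Real.rpow_natCast, ← Real.rpow_mul (abs_nonneg _)]
    congr 1; push_cast; ring
  have hc := (Real.concaveOn_rpow (p := q/2) (by linarith) (by linarith)).2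
    (show (a+d)^2 ∈ Set.Ici (0:ℝ) from sq_nonneg (a+d)) (show (a-d)^2 ∈ Set.Ici (0:ℝ) from sq_nonneg (a-d))
    (show (0:ℝ) ≤ 1/2 by norm_num) (show (0:ℝ) ≤ 1/2 by norm_num) (by norm_num)
  have hs := Real.rpow_add_le_add_rpow (sq_nonneg a) (sq_nonneg d) (p := q/2) (by linarith) (by linarith)
  simp only [smul_eq_mul] at hc
  rw [show 1/2 * (a+d)^2 + 1/2*(a-d)^2 = a^2 + d^2 by ring] at hc
  rw [key, key, key, key]
  linarith

theorem energy_eq (β α q : ℝ) (φ : ℤ → ℤ) : chainEnergy β α q φ = β * ∑' p, aTerm α q φ p := rfl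

def dl : ℤ → ℤ := fun k => if k = 0 then 1 else 0

theorem dl_supp (N : ℕ) (k : ℤ) (h : (N : ℤ) < |k|) : dl k = 0 := by
  unfold dl
  rw [if_neg]
  rintro rfl
  simp at h
  omega

def cShift (N : ℕ) : ChainConfig N ≃ ChainConfig N where
  toFun φ := ⟨fun k => φ.val k + dl k, fun k h => by
    have h1 := φ.2 k h
    have h2 := dl_supp N k h
    show φ.val k + dl k = 0
    omega⟩
  invFun φ := ⟨fun k => φ.val k - dl k, fun k h => by
    have h1 := φ.2 k h
    have h2 := dl_supp N k h
    show φ.val k - dl k = 0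
    omega⟩
  left_inv φ := by apply Subtype.ext; funext k; simp
  right_inv φ := by apply Subtype.ext; funext k; simp

def cNeg (N : ℕ) : ChainConfig N ≃ ChainConfig N where
  toFun φ := ⟨fun k => -φ.val k, fun k h => neg_eq_zero.mpr (φ.2 k h)⟩
  invFun φ := ⟨fun k => -φ.val k, fun k h => neg_eq_zero.mpr (φ.2 k h)⟩
  left_inv φ := by apply Subtype.ext; funext k; simp
  right_inv φ := by apply Subtype.ext; funext k; simp

theorem cShift_val (N : ℕ) (φ : ChainConfig N) (k : ℤ) :
    (cShift N φ).val k = φ.val k + dl k := rfl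

theorem cShift_symm_val (N : ℕ) (φ : ChainConfig N) (k : ℤ) :
    ((cShift N).symm φ).val k = φ.val k - dl k := rfl

theorem cNeg_val (N : ℕ) (φ : ChainConfig N) (k : ℤ) :
    (cNeg N φ).val k = - φ.val k := rfl

theorem energy_shift (β α q : ℝ) (hβ : 0 < β) (hα : 1 < α) (hq : 0 < q) (hq2 : q < 2) (N : ℕ)
    (φ : ChainConfig N) :
    chainEnergy β α q (cShift N φ).val + chainEnergy β α q ((cShift N).symm φ).val ≤
      2 * chainEnergy β α q φ.val + 2 * chainEnergy β α q dl := by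
  simp only [energy_eq]
  have s1 := aTerm_summable α q hα hq N _ (cShift N φ).2
  have s2 := aTerm_summable α q hα hq N _ ((cShift N).symm φ).2
  have s3 := aTerm_summable α q hα hq N _ φ.2
  have s4 := aTerm_summable α q hα hq N dl (dl_supp N)
  have : ∑' p, (aTerm α q (cShift N φ).val p + aTerm α q ((cShift N).symm φ).val p) ≤
      ∑' p, (2 * aTerm α q φ.val p + 2 * aTerm α q dl p) := by
    refine Summable.tsum_le_tsum ?_ (s1.add s2) ((s3.mul_left 2).add (s4.mul_left 2))
    rintro ⟨i, j⟩
    simp only [aTerm, cShift_val, cShift_symm_val, Int.cast_sub, Int.cast_add]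
    split_ifs with hij
    · simp
    · have := aux_ineq q hq hq2 ((φ.val i : ℝ) - φ.val j) ((dl i : ℝ) - dl j)
      rw [← add_div, ← mul_div_assoc, ← mul_div_assoc, ← add_div]
      refine div_le_div_of_nonneg_right ?_ (by positivity)
      rw [show (φ.val i : ℝ) + dl i - (φ.val j + dl j) = ((φ.val i : ℝ) - φ.val j) + ((dl i : ℝ) - dl j) by ring,
        show (φ.val i : ℝ) - dl i - (φ.val j - dl j) = ((φ.val i : ℝ) - φ.val j) - ((dl i : ℝ) - dl j) by ring]
      exact this
  rw [s1.tsum_add s2, (s3.mul_left 2).tsum_add (s4.mul_left 2), tsum_mul_left, tsum_mul_left] at this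
  nlinarith

theorem weight_shift (β α q : ℝ) (hβ : 0 < β) (hα : 1 < α) (hq : 0 < q) (hq2 : q < 2) (N : ℕ)
    (φ : ChainConfig N) :
    2 * (Real.exp (-chainEnergy β α q dl) * chainWeight β α q φ.val) ≤
    chainWeight β α q (cShift N φ).val + chainWeight β α q ((cShift N).symm φ).val := by
  have h := energy_shift β α q hβ hα hq hq2 N φ
  unfold chainWeight
  set A := chainEnergy β α q (cShift N φ).val
  set B := chainEnergy β α q ((cShift N).symm φ).val
  rw [← Real.exp_add]
  have h1 : Real.exp (-chainEnergy β α q dl + -chainEnergy β α q φ.val) ≤ Real.exp (-A/2 + -B/2) :=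
    Real.exp_le_exp.mpr (by linarith)
  have h2 : Real.exp (-A) = Real.exp (-A/2) ^ 2 := by rw [← Real.exp_nat_mul]; congr 1; push_cast; ring
  have h3 : Real.exp (-B) = Real.exp (-B/2) ^ 2 := by rw [← Real.exp_nat_mul]; congr 1; push_cast; ring
  rw [Real.exp_add (-A/2)] at h1
  rw [h2, h3]
  nlinarith [sq_nonneg (Real.exp (-A/2) - Real.exp (-B/2))]

theorem energy_lower (β α q : ℝ) (hβ : 0 < β) (hα : 1 < α) (hq : 0 < q) (N : ℕ)
    (φ : ChainConfig N) :
    ∑ i : Fin (2*N+1), β / (2*N+1:ℝ)^α * |(φ.val ((i:ℤ) - N) : ℝ)| ^ q ≤ chainEnergy β α q φ.val := by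
  have s3 := aTerm_summable α q hα hq N _ φ.2
  rw [energy_eq]
  let f : Fin (2*N+1) → ℤ × ℤ := fun i => ((i:ℤ) - N, (N:ℤ)+1)
  have hf : Function.Injective f := by
    intro i j h
    simp only [f, Prod.mk.injEq] at h
    apply Fin.ext
    omega
  have h1 : ∑ i, aTerm α q φ.val (f i) ≤ ∑' p, aTerm α q φ.val p := by
    have := s3.sum_le_tsum (Finset.univ.map ⟨f, hf⟩) (fun p _ => aTerm_nonneg α q _ p)
    simpa using this
  refine le_trans ?_ (mul_le_mul_of_nonneg_left h1 hβ.le)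
  rw [Finset.mul_sum]
  refine Finset.sum_le_sum fun i _ => ?_
  have hi := i.2
  have hne : ¬ ((i:ℤ) - N = (N:ℤ)+1) := by omega
  simp only [aTerm, f, if_neg hne, φ.2 ((N:ℤ)+1) (by rw [abs_of_nonneg] <;> omega), sub_zero]
  rw [div_mul_eq_mul_div, mul_div_assoc]
  have hpos : (0:ℝ) < |(((i:ℤ) - N - ((N:ℤ)+1) : ℤ) : ℝ)| := by
    rw [abs_pos]; exact_mod_cast (by omega : ((i:ℤ) - N - ((N:ℤ)+1)) ≠ 0)
  have hle : |(((i:ℤ) - N - ((N:ℤ)+1) : ℤ) : ℝ)| ≤ 2*N+1 := by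
    have : |(i:ℤ) - N - ((N:ℤ)+1)| ≤ 2*N+1 := abs_le.mpr ⟨by omega, by omega⟩
    exact_mod_cast this
  gcongr

theorem aux_prod {n : ℕ} (f : Fin n → ℝ) (hf : ∀ i, 1 ≤ f i) (a : Fin n) : f a ≤ ∏ i, f i := by
  rw [← Finset.mul_prod_erase Finset.univ f (Finset.mem_univ a)]
  refine le_mul_of_one_le_right (zero_le_one.trans (hf a)) ?_
  have := Finset.prod_le_prod (s := Finset.univ.erase a) (f := fun _ => (1:ℝ)) (g := f)
    (fun _ _ => zero_le_one) (fun i _ => hf i)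
  simpa using this

theorem weight_summable (β α q : ℝ) (hβ : 0 < β) (hα : 1 < α) (hq : 0 < q) (N : ℕ) :
    Summable (fun φ : ChainConfig N => (1 + ((φ.val 0 : ℤ) : ℝ)^2) * chainWeight β α q φ.val) := by
  set c := β / (2*N+1:ℝ)^α with hc
  have hc0 : 0 < c := by positivity
  have hpi := aux_pi _ (fun n => by positivity) (aux_one_dim q c hq hc0) (2*N+1)
  let F : ChainConfig N → (Fin (2*N+1) → ℤ) := fun φ i => φ.val ((i:ℤ) - N)
  have hF : Function.Injective F := by
    intro φ ψ h
    apply Subtype.ext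
    funext k
    by_cases hk : (N:ℤ) < |k|
    · rw [φ.2 k hk, ψ.2 k hk]
    · have hk' := abs_le.mp (not_lt.mp hk)
      have := congrFun h ⟨(k + N).toNat, by omega⟩
      simp only [F] at this
      have e : (((k + N).toNat : ℕ) : ℤ) - N = k := by omega
      rwa [e] at this
  refine Summable.of_nonneg_of_le (fun φ => by unfold chainWeight; positivity) ?_
    (hpi.comp_injective hF)
  intro φ
  simp only [Function.comp, F]
  rw [Finset.prod_mul_distrib, ← Real.exp_sum, Finset.sum_neg_distrib]
  have h0 : (1 + ((φ.val 0 : ℤ) : ℝ)^2) ≤ ∏ i : Fin (2*N+1), (1 + ((φ.val ((i:ℤ) - N) : ℤ) : ℝ)^2) := by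
    have := aux_prod (fun i : Fin (2*N+1) => 1 + ((φ.val ((i:ℤ) - N) : ℤ) : ℝ)^2)
      (fun i => le_add_of_nonneg_right (sq_nonneg _)) ⟨N, by omega⟩
    simpa using this
  have h1 := energy_lower β α q hβ hα hq N φ
  unfold chainWeight
  gcongr

/-- **Lower bound for the `q`-SOS long-range chain for `α ∈ (1,2]`.**
For every `β ∈ (0,∞)`, every `q ∈ (0,2)` and every `α ∈ (1,2]`, there exists `c_β > 0`
such that for every `N ≥ 1`, `c_β ≤ Var^{q-SOS}_{N,β,α}[φ(0)]`. -/
theorem qSOS_chain_lower_bound_alpha_le_two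
    (β : ℝ) (hβ : 0 < β) (q : ℝ) (hq₀ : 0 < q) (hq₂ : q < 2)
    (α : ℝ) (hα₁ : 1 < α) (hα₂ : α ≤ 2) :
    ∃ c : ℝ, 0 < c ∧
      ∀ N : ℕ, 1 ≤ N → c ≤ chainVar N β α q := by
  set K := Real.exp (-chainEnergy β α q dl) with hK
  have hK0 : 0 < K := Real.exp_pos _
  refine ⟨K / (1 + K), by positivity, fun N _ => ?_⟩
  have hw0 : ∀ φ : ℤ → ℤ, 0 < chainWeight β α q φ := fun φ => Real.exp_pos _
  have hs := weight_summable β α q hβ hα₁ hq₀ N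
  have hsw : Summable (fun φ : ChainConfig N => chainWeight β α q φ.val) :=
    hs.of_nonneg_of_le (fun φ => (hw0 _).le)
      (fun φ => by nlinarith [hw0 φ.val, mul_nonneg (sq_nonneg ((φ.val 0 : ℤ) : ℝ)) (hw0 φ.val).le])
  have hs2 : Summable (fun φ : ChainConfig N => ((φ.val 0 : ℤ) : ℝ)^2 * chainWeight β α q φ.val) :=
    (hs.sub hsw).congr (fun φ => by ring)
  have hmean : chainMean N β α q = 0 := by
    unfold chainMean
    have h := (cNeg N).tsum_eq (fun φ : ChainConfig N => ((φ.val 0 : ℤ) : ℝ) * chainWeight β α q φ.val)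
    have hw : ∀ φ : ChainConfig N, chainWeight β α q (cNeg N φ).val = chainWeight β α q φ.val := by
      intro φ
      unfold chainWeight chainEnergy
      congr 3
      refine tsum_congr fun p => ?_
      have : (((cNeg N φ).val p.1 - (cNeg N φ).val p.2 : ℤ) : ℝ) = -((φ.val p.1 - φ.val p.2 : ℤ) : ℝ) := by
        simp only [cNeg_val]; push_cast; ring
      rw [this, abs_neg]
    simp only [hw] at h
    have h' : ∑' φ : ChainConfig N, (((cNeg N φ).val 0 : ℤ) : ℝ) * chainWeight β α q φ.val
        = - ∑' φ : ChainConfig N, ((φ.val 0 : ℤ) : ℝ) * chainWeight β α q φ.val := by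
      rw [← tsum_neg]
      refine tsum_congr fun φ => ?_
      simp only [cNeg_val]; push_cast; ring
    rw [h'] at h
    have : ∑' φ : ChainConfig N, ((φ.val 0 : ℤ) : ℝ) * chainWeight β α q φ.val = 0 := by linarith
    rw [this, zero_div]
  have hZ : 0 < chainZ N β α q :=
    hsw.tsum_pos (fun φ => (hw0 _).le) ⟨fun _ => 0, fun _ _ => rfl⟩ (hw0 _)
  unfold chainVar
  rw [hmean, zero_pow (by norm_num), sub_zero, div_le_div_iff₀ (by positivity) hZ]
  set G : ChainConfig N → ℝ := fun φ => ((φ.val 0 : ℤ) : ℝ)^2 * chainWeight β α q φ.val with hG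
  have e1 := (cShift N).tsum_eq G
  have e2 := (cShift N).symm.tsum_eq G
  have sG1 : Summable (fun φ => G (cShift N φ)) := (cShift N).summable_iff.mpr hs2
  have sG2 : Summable (fun φ => G ((cShift N).symm φ)) := (cShift N).symm.summable_iff.mpr hs2
  have main : ∑' φ : ChainConfig N, 2 * K * chainWeight β α q φ.val ≤
      ∑' φ : ChainConfig N, ((G (cShift N φ) + G ((cShift N).symm φ)) + 2 * K * G φ) := by
    refine Summable.tsum_le_tsum ?_ (hsw.mul_left _) ((sG1.add sG2).add (hs2.mul_left _))
    intro φ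
    have g1 : 0 ≤ G (cShift N φ) := mul_nonneg (sq_nonneg _) (hw0 _).le
    have g2 : 0 ≤ G ((cShift N).symm φ) := mul_nonneg (sq_nonneg _) (hw0 _).le
    by_cases h0 : φ.val 0 = 0
    · have a := weight_shift β α q hβ hα₁ hq₀ hq₂ N φ
      have b1 : G (cShift N φ) = chainWeight β α q (cShift N φ).val := by
        have : (cShift N φ).val 0 = 1 := by rw [cShift_val, h0]; rfl
        simp only [hG, this]; simp
      have b2 : G ((cShift N).symm φ) = chainWeight β α q ((cShift N).symm φ).val := by
        have : ((cShift N).symm φ).val 0 = -1 := by rw [cShift_symm_val, h0]; rfl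
        simp only [hG, this]; simp
      have b3 : G φ = 0 := by simp [hG, h0]
      rw [b1, b2, b3]
      linarith
    · have : (1:ℝ) ≤ ((φ.val 0 : ℤ) : ℝ)^2 := by
        exact_mod_cast Int.one_le_abs (pow_ne_zero 2 h0) |>.trans (abs_of_nonneg (sq_nonneg _)).le
      have hh : chainWeight β α q φ.val ≤ G φ := le_mul_of_one_le_left (hw0 _).le this
      have := mul_le_mul_of_nonneg_left hh (by positivity : 0 ≤ 2 * K)
      linarith
  rw [(sG1.add sG2).tsum_add (hs2.mul_left _), sG1.tsum_add sG2, tsum_mul_left, tsum_mul_left, e1, e2] at main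
  unfold chainZ
  linarith
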